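/- Fix μ ∈ M_α(X, m), a natural number n, and a measurable partition of unity D on X with τₙ(μ, D) > −∞. Suppose (f_k) is a sequence in L¹(X, m) with ‖f_k‖ = 1 such that Σ_{g ∈ D} μ[g]·ln( (∫_X g·|f_k ∘ αⁿ| dm)/μ[g] ) → τₙ(μ, D) and such that for each g ∈ D the limit C_g := lim_{k→∞} ∫_X g·|f_k ∘ αⁿ| dm exists. Then C_g > 0 whenever μ[g] > 0, and sup over f ∈ L¹(X, m) with ‖f‖ = 1 of Σ_{g ∈ D, μ[g] > 0} μ[g]·( ∫_X g·|f ∘ αⁿ| dm )/C_g equals 1. -/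

import Mathlib

open MeasureTheory Filter
open scoped ENNReal NNReal

noncomputable section

/-- The Birkhoff sum `S_n φ (x) = φ(x) + φ(α x) + ⋯ + φ(α^{n-1} x)`. -/
def birkhoff {X : Type*} (α : X → X) (φ : X → ℝ) (n : ℕ) (x : X) : ℝ :=
  ∑ i ∈ Finset.range n, φ (α^[i] x)

/-- Boundedness of the shift operator `A f = f ∘ α` on `L¹(X, m)`:
there is `C > 0` with `m (α⁻¹ G) ≤ C · m G` for all measurable `G`. -/
def ShiftBounded {X : Type*} [MeasurableSpace X] (m : Measure X) (α : X → X) : Prop :=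
  ∃ C : ℝ≥0, 0 < C ∧ ∀ G : Set X, MeasurableSet G → m (α ⁻¹' G) ≤ (C : ℝ≥0∞) * m G

/-- The operator norm `‖(e^ψ A^s)^k‖` of the `k`-th power of the weighted shift operator
`e^ψ A^s` (with base shift `α^[s]`) acting on `L¹(X, m)`, computed as the supremum of
`‖(e^ψ A^s)^k f‖₁` over `f` with `‖f‖₁ = 1`. -/
def weightedOpNorm {X : Type*} [MeasurableSpace X] (m : Measure X) (α : X → X) (s : ℕ)
    (ψ : X → ℝ) (k : ℕ) : ℝ :=
  sSup {r : ℝ | ∃ f : X → ℝ, Integrable f m ∧ (∫ x, |f x| ∂m) = 1 ∧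
    r = ∫ x, Real.exp (∑ j ∈ Finset.range k, ψ (α^[s * j] x)) * |f (α^[s * k] x)| ∂m}

/-- `λ(ψ, A^s)`: the logarithm of the spectral radius of `e^ψ A^s` on `L¹(X, m)`. -/
def spectralPotentialBase {X : Type*} [MeasurableSpace X] (m : Measure X) (α : X → X)
    (s : ℕ) (ψ : X → ℝ) : ℝ :=
  limUnder atTop fun k : ℕ => Real.log (weightedOpNorm m α s ψ k) / (k : ℝ)

/-- The spectral potential `λ(φ) = lim (1/n) ln ‖A_φⁿ‖`. -/
def spectralPotential {X : Type*} [MeasurableSpace X] (m : Measure X) (α : X → X)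
    (φ : X → ℝ) : ℝ :=
  spectralPotentialBase m α 1 φ

/-- A functional on `L^∞(X, m)` is positive if it is nonnegative on nonnegative functions. -/
def IsPositiveFunctional {X : Type*} [MeasurableSpace X] (m : Measure X)
    (μ : Lp ℝ ⊤ m → ℝ) : Prop :=
  ∀ φ : Lp ℝ ⊤ m, (0 : X → ℝ) ≤ᵐ[m] ⇑φ → 0 ≤ μ φ

/-- A functional on `L^∞(X, m)` is normalized if its value on the unit function is `1`. -/
def IsNormalizedFunctional {X : Type*} [MeasurableSpace X] (m : Measure X)
    (μ : Lp ℝ ⊤ m → ℝ) : Prop :=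
  ∀ φ : Lp ℝ ⊤ m, ⇑φ =ᵐ[m] (fun _ => (1 : ℝ)) → μ φ = 1

/-- A functional `μ` on `L^∞(X, m)` is `α`-invariant if `μ[f ∘ α] = μ[f]`. -/
def IsInvariantFunctional {X : Type*} [MeasurableSpace X] (m : Measure X) (α : X → X)
    (μ : Lp ℝ ⊤ m → ℝ) : Prop :=
  ∀ φ ψ : Lp ℝ ⊤ m, ⇑ψ =ᵐ[m] (fun x => φ (α x)) → μ ψ = μ φ

/-- `μ ∈ M_α(X, m)`: positive, normalized and `α`-invariant. -/
def MemMalpha {X : Type*} [MeasurableSpace X] (m : Measure X) (α : X → X)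
    (μ : Lp ℝ ⊤ m → ℝ) : Prop :=
  IsPositiveFunctional m μ ∧ IsNormalizedFunctional m μ ∧ IsInvariantFunctional m α μ

/-- A measurable partition of unity on `X` made of nonnegative elements of `L^∞(X, m)`
summing to `1`. -/
structure PartUnity {X : Type*} [MeasurableSpace X] (m : Measure X) where
  k : ℕ
  g : Fin k → Lp ℝ ⊤ m
  nonneg : ∀ i, (0 : X → ℝ) ≤ᵐ[m] ⇑(g i)
  sum_one : ∀ᵐ x ∂m, (∑ i, (g i : Lp ℝ ⊤ m) x) = 1

/-- The summand `a · ln (r / a)` with the conventions: it is `0` if `a = 0`, and `-∞` if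
`a ≠ 0` and `r = 0`. -/
def entTerm (a r : ℝ) : EReal :=
  if a = 0 then 0 else if r = 0 then ⊥ else ((a * Real.log (r / a) : ℝ) : EReal)

/-- `τₙ(μ, D)`. -/
def tauN {X : Type*} [MeasurableSpace X] (m : Measure X) (α : X → X)
    (μ : Lp ℝ ⊤ m → ℝ) (n : ℕ) (D : PartUnity m) : EReal :=
  sSup {r : EReal | ∃ f : X → ℝ, Integrable f m ∧ (∫ x, |f x| ∂m) = 1 ∧
    r = ∑ i, entTerm (μ (D.g i)) (∫ x, (D.g i : Lp ℝ ⊤ m) x * |f (α^[n] x)| ∂m)}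

/-- The t-entropy `τ(μ) = inf_{n, D} τₙ(μ, D) / n`. -/
def tEntropy {X : Type*} [MeasurableSpace X] (m : Measure X) (α : X → X)
    (μ : Lp ℝ ⊤ m → ℝ) : EReal :=
  ⨅ (n : ℕ) (_ : 0 < n) (D : PartUnity m), (((n : ℝ)⁻¹ : ℝ) : EReal) * tauN m α μ n D

/-- The t-entropy extended by `τ(μ) = -∞` outside `M_α(X, m)`. -/
def tEntropyExt {X : Type*} [MeasurableSpace X] (m : Measure X) (α : X → X)
    (μ : Lp ℝ ⊤ m → ℝ) : EReal :=
  @ite _ (MemMalpha m α μ) (Classical.dec _) (tEntropy m α μ) ⊥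

/-!
For fixed nonnegative weights `a`, the vectors of moments `(∫ gᵢ·|h ∘ αⁿ| dm)ᵢ` with `‖h‖₁ = 1`
form a convex set `V`, and `τₙ(μ, D)` is the supremum over `V` of the functional
`v ↦ ∑ aᵢ ln (vᵢ / aᵢ)`. This functional is continuous into `[-∞, ∞)` on the nonnegative orthant,
so the limit `C` of a maximizing sequence maximizes it on the closure of `V`. As the maximum is not
`-∞`, each `Cᵢ` with `aᵢ > 0` is positive, and the functional is differentiable at `C`, with partial
derivatives `aᵢ / Cᵢ`. The first-order condition `∑ (aᵢ / Cᵢ) (wᵢ - Cᵢ) ≤ 0` for `w ∈ V` is the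
upper bound `∑ aᵢ wᵢ / Cᵢ ≤ ∑ aᵢ`, with equality at `w = C`, a limit of points of `V`.
-/

lemma entTerm_eq_mul_log {a r : ℝ} (ha : 0 ≤ a) (hr : 0 ≤ r) :
    entTerm a r = a * ENNReal.log (ENNReal.ofReal (r / a)) := by
  rcases ha.eq_or_lt with rfl | ha
  · simp [entTerm]
  rcases hr.eq_or_lt with rfl | hr
  · simp [entTerm, ha.ne', EReal.coe_mul_bot_of_pos ha]
  · simp [entTerm, ha.ne', hr.ne', ENNReal.log_ofReal_of_pos (div_pos hr ha)]

lemma entTerm_eq_coe {a r : ℝ} (h : a ≠ 0 → r ≠ 0) :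
    entTerm a r = ((a * Real.log (r / a) : ℝ) : EReal) := by
  by_cases ha : a = 0
  · simp [entTerm, ha]
  · simp [entTerm, ha, h ha]

lemma entTerm_ne_top (a r : ℝ) : entTerm a r ≠ ⊤ := by
  unfold entTerm
  split_ifs
  exacts [EReal.zero_ne_top, bot_ne_top, EReal.coe_ne_top _]

lemma continuousOn_entTerm {a : ℝ} (ha : 0 ≤ a) : ContinuousOn (entTerm a) (Set.Ici 0) := by
  have hlog : Continuous fun r : ℝ => (a : EReal) * ENNReal.log (ENNReal.ofReal (r / a)) :=
    continuous_iff_continuousAt.2 fun r => EReal.Tendsto.const_mul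
      (ENNReal.continuous_log.comp
        (ENNReal.continuous_ofReal.comp (continuous_id.div_const a))).continuousAt
      (.inl (EReal.coe_ne_bot a)) (.inl (EReal.coe_ne_top a))
  exact hlog.continuousOn.congr fun r hr => entTerm_eq_mul_log ha hr

lemma hasDerivAt_mul_log_div {a c : ℝ} (h : a ≠ 0 → c ≠ 0) :
    HasDerivAt (fun r => a * Real.log (r / a)) (a / c) c := by
  by_cases ha : a = 0
  · simpa [ha] using hasDerivAt_const c (0 : ℝ)
  · have hc := h ha
    have hderiv := (((hasDerivAt_id' c).div_const a).log (div_ne_zero hc ha)).const_mul a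
    exact hderiv.congr_deriv (by field_simp)

lemma ereal_sum_ne_top {ι : Type*} {s : Finset ι} {x : ι → EReal} (hx : ∀ i ∈ s, x i ≠ ⊤) :
    ∑ i ∈ s, x i ≠ ⊤ :=
  Finset.sum_induction x (· ≠ ⊤) (fun _ _ => EReal.add_ne_top) EReal.zero_ne_top hx

lemma tendsto_ereal_sum_of_ne_top {ι κ : Type*} {l : Filter κ} {s : Finset ι}
    {u : ι → κ → EReal} {x : ι → EReal} (hx : ∀ i ∈ s, x i ≠ ⊤)
    (hu : ∀ i ∈ s, Tendsto (u i) l (nhds (x i))) :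
    Tendsto (fun k => ∑ i ∈ s, u i k) l (nhds (∑ i ∈ s, x i)) := by
  classical
  induction s using Finset.induction_on with
  | empty => simpa only [Finset.sum_empty] using tendsto_const_nhds
  | insert i s hi ih =>
    rw [Finset.forall_mem_insert] at hx hu
    simp only [Finset.sum_insert hi]
    have hadd := EReal.continuousAt_add (p := (x i, ∑ j ∈ s, x j))
      (.inl hx.1) (.inr (ereal_sum_ne_top hx.2))
    exact hadd.tendsto.comp (hu.1.prodMk_nhds (ih hx.2 hu.2))

section EntropySum

variable {ι : Type*} [Fintype ι] {a C : ι → ℝ}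

lemma sum_entTerm_eq_coe {v : ι → ℝ} (h : ∀ i, a i ≠ 0 → v i ≠ 0) :
    ∑ i, entTerm (a i) (v i) = ((∑ i, a i * Real.log (v i / a i) : ℝ) : EReal) := by
  simp only [fun i => entTerm_eq_coe (h i)]
  exact (map_sum (⟨⟨Real.toEReal, EReal.coe_zero⟩, EReal.coe_add⟩ : ℝ →+ EReal) _ _).symm

lemma continuousOn_sum_entTerm (ha : 0 ≤ a) :
    ContinuousOn (fun v : ι → ℝ => ∑ i, entTerm (a i) (v i)) (Set.Ici 0) := by
  intro v hv
  refine tendsto_ereal_sum_of_ne_top (fun _ _ => entTerm_ne_top _ _) fun i _ => ?_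
  have hmaps : Set.MapsTo (fun w : ι → ℝ => w i) (Set.Ici 0) (Set.Ici 0) := fun _ hw => hw i
  exact (continuousOn_entTerm (ha i)).comp (continuous_apply i).continuousOn hmaps v hv

lemma ne_zero_of_bot_lt_sum_entTerm {v : ι → ℝ} (h : ⊥ < ∑ i, entTerm (a i) (v i)) {i : ι}
    (hi : a i ≠ 0) : v i ≠ 0 := by
  classical
  intro hv
  have hbot : entTerm (a i) (v i) = ⊥ := by simp [entTerm, hi, hv]
  rw [← Finset.add_sum_erase _ _ (Finset.mem_univ i), hbot, EReal.bot_add] at h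
  exact lt_irrefl _ h

lemma sum_mul_div_le_sum_of_isLocalMaxOn {K : Set (ι → ℝ)} (hK : Convex ℝ K)
    (hCK : C ∈ K) (hC : ∀ i, a i ≠ 0 → C i ≠ 0)
    (hmax : IsLocalMaxOn (fun v : ι → ℝ => ∑ i, a i * Real.log (v i / a i)) K C)
    {w : ι → ℝ} (hw : w ∈ K) : ∑ i, a i * (w i / C i) ≤ ∑ i, a i := by
  have hderiv : HasFDerivAt (fun v : ι → ℝ => ∑ i, a i * Real.log (v i / a i))
      (∑ i, (a i / C i) • ContinuousLinearMap.proj (R := ℝ) (φ := fun _ : ι => ℝ) i) C :=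
    HasFDerivAt.fun_sum fun i _ => HasDerivAt.comp_hasFDerivAt C
      (h₂ := fun r => a i * Real.log (r / a i)) (hasDerivAt_mul_log_div (hC i))
      (hasFDerivAt_apply i C)
  have hle := hmax.hasFDerivWithinAt_nonpos hderiv.hasFDerivWithinAt
    (sub_mem_posTangentConeAt_of_segment_subset (hK.segment_subset hCK hw))
  rw [← sub_nonpos, ← Finset.sum_sub_distrib]
  convert hle using 1
  rw [sum_apply]
  refine Finset.sum_congr rfl fun i _ => ?_
  by_cases hi : a i = 0
  · simp [hi]
  · have := hC i hi
    simp only [smul_apply, ContinuousLinearMap.proj_apply, Pi.sub_apply, smul_eq_mul]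
    field_simp

-- The conclusion is only local because `Real.log 0 = 0`: the real-valued sum may be larger than at
-- `C` where some `v i = 0` makes the extended one `-∞`.
lemma isLocalMaxOn_sum_mul_log_of_isMaxOn {K : Set (ι → ℝ)} (hC : ∀ i, a i ≠ 0 → C i ≠ 0)
    (hmax : IsMaxOn (fun v : ι → ℝ => ∑ i, entTerm (a i) (v i)) K C) :
    IsLocalMaxOn (fun v : ι → ℝ => ∑ i, a i * Real.log (v i / a i)) K C := by
  have hne : ∀ᶠ v in nhdsWithin C K, ∀ i, a i ≠ 0 → v i ≠ 0 := by
    refine eventually_nhdsWithin_of_eventually_nhds (eventually_all.2 fun i => ?_)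
    by_cases hi : a i = 0
    · simp [hi]
    · filter_upwards [(continuous_apply i).continuousAt.eventually_ne (hC i hi)]
        with v hv _ using hv
  filter_upwards [hne, self_mem_nhdsWithin] with v hv hvK
  simpa only [Set.mem_ofPred_eq, sum_entTerm_eq_coe hv, sum_entTerm_eq_coe hC,
    EReal.coe_le_coe_iff] using hmax hvK

lemma isMaxOn_closure_sum_entTerm (ha : 0 ≤ a) {V : Set (ι → ℝ)} (hV : V ⊆ Set.Ici 0)
    (hmax : ∀ v ∈ V, ∑ i, entTerm (a i) (v i) ≤ ∑ i, entTerm (a i) (C i)) :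
    IsMaxOn (fun v : ι → ℝ => ∑ i, entTerm (a i) (v i)) (closure V) C := by
  have hclosed := (continuousOn_sum_entTerm ha).preimage_isClosed_of_isClosed isClosed_Ici
    (isClosed_Iic (a := ∑ i, entTerm (a i) (C i)))
  have hsub := closure_minimal (t := _ ∩ _) (fun w hw => ⟨hV hw, hmax w hw⟩) hclosed
  exact fun v hv => (hsub hv).2

lemma isLUB_image_sum_mul_div {V : Set (ι → ℝ)} (hV : Convex ℝ V) (hCV : C ∈ closure V)
    (hC : ∀ i, a i ≠ 0 → C i ≠ 0)
    (hmax : IsMaxOn (fun v : ι → ℝ => ∑ i, entTerm (a i) (v i)) (closure V) C) :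
    IsLUB ((fun w : ι → ℝ => ∑ i, a i * (w i / C i)) '' V) (∑ i, a i) := by
  refine isLUB_of_mem_closure ?_ ?_
  · rintro _ ⟨w, hw, rfl⟩
    exact sum_mul_div_le_sum_of_isLocalMaxOn hV.closure hCV hC
      (isLocalMaxOn_sum_mul_log_of_isMaxOn hC hmax) (subset_closure hw)
  · have hvalue : ∑ i, a i * (C i / C i) = ∑ i, a i := by
      refine Finset.sum_congr rfl fun i _ => ?_
      by_cases hi : a i = 0
      · simp [hi]
      · rw [div_self (hC i hi), mul_one]
    have hcont : Continuous fun w : ι → ℝ => ∑ i, a i * (w i / C i) := by fun_prop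
    exact hvalue ▸ image_closure_subset_closure_image hcont ⟨C, hCV, rfl⟩

theorem pos_and_isLUB_of_tendsto_sum_entTerm (ha : 0 ≤ a) {V : Set (ι → ℝ)} (hV : Convex ℝ V)
    (hV0 : V ⊆ Set.Ici 0) {T : EReal} (hTbot : ⊥ < T)
    (hT : ∀ v ∈ V, ∑ i, entTerm (a i) (v i) ≤ T)
    {κ : Type*} {l : Filter κ} [l.NeBot] {u : κ → ι → ℝ} (hu : ∀ k, u k ∈ V)
    (huT : Tendsto (fun k => ∑ i, entTerm (a i) (u k i)) l (nhds T))
    (huC : Tendsto u l (nhds C)) :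
    (∀ i, 0 < a i → 0 < C i) ∧
      IsLUB ((fun w : ι → ℝ => ∑ i, a i * (w i / C i)) '' V) (∑ i, a i) := by
  have hC0 : C ∈ Set.Ici 0 := isClosed_Ici.mem_of_tendsto huC (.of_forall fun k => hV0 (hu k))
  have huC' : Tendsto u l (nhdsWithin C (Set.Ici 0)) :=
    tendsto_nhdsWithin_iff.2 ⟨huC, .of_forall fun k => hV0 (hu k)⟩
  obtain rfl : T = ∑ i, entTerm (a i) (C i) :=
    tendsto_nhds_unique huT ((continuousOn_sum_entTerm ha C hC0).tendsto.comp huC')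
  have hC : ∀ i, a i ≠ 0 → C i ≠ 0 := fun i => ne_zero_of_bot_lt_sum_entTerm hTbot
  exact ⟨fun i hi => (hC0 i).lt_of_ne' (hC i hi.ne'),
    isLUB_image_sum_mul_div hV (mem_closure_of_tendsto huC (.of_forall hu)) hC
      (isMaxOn_closure_sum_entTerm ha hV0 hT)⟩

end EntropySum

section ShiftMoments

variable {X : Type*} [MeasurableSpace X] {m : Measure X} {α : X → X} {ι : Type*}

lemma ShiftBounded.iterate (hα : Measurable α) (hbdd : ShiftBounded m α) (n : ℕ) :
    ShiftBounded m α^[n] := by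
  obtain ⟨c, hc, hle⟩ := hbdd
  refine ⟨c ^ n, pow_pos hc n, fun G hG => ?_⟩
  induction n with
  | zero => simp
  | succ n ih =>
    calc m (α^[n + 1] ⁻¹' G) = m (α ⁻¹' (α^[n] ⁻¹' G)) := by
          rw [Function.iterate_succ, Set.preimage_comp]
      _ ≤ c * m (α^[n] ⁻¹' G) := hle _ (hα.iterate n hG)
      _ ≤ c * (((c ^ n : ℝ≥0) : ℝ≥0∞) * m G) := by gcongr
      _ = ((c ^ (n + 1) : ℝ≥0) : ℝ≥0∞) * m G := by
          rw [← mul_assoc, ← ENNReal.coe_mul, ← pow_succ']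

lemma ShiftBounded.integrable_comp (hα : Measurable α) (hbdd : ShiftBounded m α)
    {E : Type*} [NormedAddCommGroup E] {h : X → E} (hh : Integrable h m) :
    Integrable (h ∘ α) m := by
  obtain ⟨c, _, hle⟩ := hbdd
  have hmap : m.map α ≤ (c : ℝ≥0∞) • m := Measure.le_iff.2 fun s hs => by
    simpa [Measure.map_apply hα hs] using hle s hs
  exact (hh.of_measure_le_smul ENNReal.coe_ne_top hmap).comp_measurable hα

lemma integral_mul_abs_mul_add_mul {φ f g : X → ℝ}
    (hf : Integrable (fun x => φ x * |f x|) m) (hg : Integrable (fun x => φ x * |g x|) m)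
    {s t : ℝ} (hs : 0 ≤ s) (ht : 0 ≤ t) :
    ∫ x, φ x * |(s * |f x| + t * |g x|)| ∂m =
      s * ∫ x, φ x * |f x| ∂m + t * ∫ x, φ x * |g x| ∂m := by
  rw [← integral_const_mul, ← integral_const_mul,
    ← integral_add (hf.const_mul s) (hg.const_mul t)]
  refine integral_congr_ae (.of_forall fun x => ?_)
  have hnonneg : 0 ≤ s * |f x| + t * |g x| := by positivity
  simp only [abs_of_nonneg hnonneg]
  ring

/-- The set of vectors `(∫ gᵢ·|h ∘ β| dm)ᵢ`, where `h` runs through the unit sphere of `L¹(X, m)`.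
The suprema over `h` in the definition of `τₙ(μ, D)` and in Lemma 5 are suprema over this set, for
`β = αⁿ`. -/
def shiftMoments (m : Measure X) (β : X → X) (g : ι → Lp ℝ ⊤ m) : Set (ι → ℝ) :=
  (fun h i => ∫ x, g i x * |h (β x)| ∂m) '' {h | Integrable h m ∧ ∫ x, |h x| ∂m = 1}

lemma shiftMoments_subset_Ici (β : X → X) {g : ι → Lp ℝ ⊤ m}
    (hg : ∀ i, (0 : X → ℝ) ≤ᵐ[m] g i) : shiftMoments m β g ⊆ Set.Ici 0 := by
  rintro _ ⟨h, -, rfl⟩ i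
  exact integral_nonneg_of_ae ((hg i).mono fun x hx => mul_nonneg hx (abs_nonneg _))

lemma convex_shiftMoments {β : X → X} (hβ : Measurable β) (hbdd : ShiftBounded m β)
    (g : ι → Lp ℝ ⊤ m) : Convex ℝ (shiftMoments m β g) := by
  have hint : ∀ i {h : X → ℝ}, Integrable h m → Integrable (fun x => g i x * |h (β x)|) m :=
    fun i h hh => (hbdd.integrable_comp hβ hh).abs.mul_of_top_right (Lp.memLp (g i))
  rintro _ ⟨f, ⟨hf, hf1⟩, rfl⟩ _ ⟨h, ⟨hh, hh1⟩, rfl⟩ s t hs ht hst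
  refine ⟨fun x => s * |f x| + t * |h x|,
    ⟨(hf.abs.const_mul s).add (hh.abs.const_mul t), ?_⟩, ?_⟩
  · have hnorm := integral_mul_abs_mul_add_mul (m := m) (φ := 1) (f := f) (g := h)
      (by simpa only [Pi.one_apply, one_mul] using hf.abs)
      (by simpa only [Pi.one_apply, one_mul] using hh.abs) hs ht
    simpa only [Pi.one_apply, one_mul, hf1, hh1, mul_one, hst] using hnorm
  · funext i
    exact integral_mul_abs_mul_add_mul (hint i hf) (hint i hh) hs ht

lemma sum_entTerm_le_tauN (μ : Lp ℝ ⊤ m → ℝ) (n : ℕ) (D : PartUnity m) {v : Fin D.k → ℝ}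
    (hv : v ∈ shiftMoments m α^[n] D.g) :
    ∑ i, entTerm (μ (D.g i)) (v i) ≤ tauN m α μ n D := by
  obtain ⟨h, ⟨hh, hh1⟩, rfl⟩ := hv
  exact le_sSup ⟨h, hh, hh1, rfl⟩

lemma PartUnity.sum_map_eq_one (D : PartUnity m) {μ : Lp ℝ ⊤ m →ₗ[ℝ] ℝ}
    (hμ : IsNormalizedFunctional m μ) : ∑ i, μ (D.g i) = 1 := by
  rw [← map_sum]
  refine hμ _ ?_
  filter_upwards [Lp.coeFn_fun_finsetSum Finset.univ D.g, D.sum_one] with x hsum hone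
  rw [hsum, hone]

lemma image_shiftMoments_eq [Fintype ι] (β : X → X) (g : ι → Lp ℝ ⊤ m)
    {a : ι → ℝ} (ha : 0 ≤ a) (C : ι → ℝ) :
    (fun w : ι → ℝ => ∑ i, a i * (w i / C i)) '' shiftMoments m β g =
      {r : ℝ | ∃ h : X → ℝ, Integrable h m ∧ (∫ x, |h x| ∂m) = 1 ∧
        r = ∑ i ∈ Finset.univ.filter (fun i => 0 < a i),
              a i * ((∫ x, g i x * |h (β x)| ∂m) / C i)} := by
  have hfilter : ∀ w : ι → ℝ, ∑ i ∈ Finset.univ.filter (fun i => 0 < a i), a i * (w i / C i) =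
      ∑ i, a i * (w i / C i) := fun w =>
    Finset.sum_filter_of_ne fun i _ hi => (ha i).lt_of_ne' (left_ne_zero_of_mul hi)
  ext r
  simp only [shiftMoments, Set.image_image, Set.mem_image, Set.mem_ofPred_eq, and_assoc, hfilter,
    eq_comm (a := r)]

theorem maximizing_sequence_sup_eq_one_general
    (hα : Measurable α) (hbdd : ShiftBounded m α)
    (μ : Lp ℝ ⊤ m →ₗ[ℝ] ℝ) (hpos : IsPositiveFunctional m μ) (hone : IsNormalizedFunctional m μ)
    (n : ℕ) (D : PartUnity m) (hfin : ⊥ < tauN m α μ n D)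
    {κ : Type*} {l : Filter κ} [l.NeBot] (f : κ → X → ℝ) (hint : ∀ k, Integrable (f k) m)
    (hnorm : ∀ k, (∫ x, |f k x| ∂m) = 1) (C : Fin D.k → ℝ)
    (hmax : Tendsto
      (fun k => ∑ i, entTerm (μ (D.g i)) (∫ x, (D.g i : Lp ℝ ⊤ m) x * |f k (α^[n] x)| ∂m))
      l (nhds (tauN m α μ n D)))
    (hC : ∀ i, Tendsto (fun k => ∫ x, (D.g i : Lp ℝ ⊤ m) x * |f k (α^[n] x)| ∂m)
      l (nhds (C i))) :
    (∀ i, 0 < μ (D.g i) → 0 < C i) ∧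
    sSup {r : ℝ | ∃ h : X → ℝ, Integrable h m ∧ (∫ x, |h x| ∂m) = 1 ∧
        r = ∑ i ∈ Finset.univ.filter (fun i => 0 < μ (D.g i)),
              μ (D.g i) * ((∫ x, (D.g i : Lp ℝ ⊤ m) x * |h (α^[n] x)| ∂m) / C i)} = 1 := by
  have hμ : 0 ≤ fun i => μ (D.g i) := fun i => hpos _ (D.nonneg i)
  have hmem : ∀ k, (fun i => ∫ x, D.g i x * |f k (α^[n] x)| ∂m) ∈ shiftMoments m α^[n] D.g :=
    fun k => ⟨f k, ⟨hint k, hnorm k⟩, rfl⟩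
  obtain ⟨k₀⟩ := l.nonempty_of_neBot
  obtain ⟨hCpos, hlub⟩ := pos_and_isLUB_of_tendsto_sum_entTerm hμ
    (convex_shiftMoments (hα.iterate n) (hbdd.iterate hα n) D.g)
    (shiftMoments_subset_Ici _ D.nonneg) hfin (fun _ => sum_entTerm_le_tauN μ n D) hmem hmax
    (tendsto_pi_nhds.2 hC)
  refine ⟨hCpos, ?_⟩
  rw [← image_shiftMoments_eq _ _ hμ, hlub.csSup_eq ⟨_, _, hmem k₀, rfl⟩, D.sum_map_eq_one hone]

end ShiftMoments

/-- **Lemma 5**: if `τₙ(μ, D) > -∞` and `(f_k)` is a maximizing sequence for `τₙ(μ, D)`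
such that the limits `C i = lim_k ∫ gᵢ·|f_k ∘ αⁿ| dm` exist, then `C i > 0` whenever
`μ[gᵢ] > 0`, and `sup_{‖f‖=1} Σ_{μ[gᵢ]>0} μ[gᵢ]·(∫ gᵢ·|f ∘ αⁿ| dm)/C i = 1`. -/
theorem maximizing_sequence_sup_eq_one
    {X : Type*} [MeasurableSpace X] (m : Measure X) (α : X → X)
    (hα : Measurable α) (hbdd : ShiftBounded m α)
    (μ : Lp ℝ ⊤ m →L[ℝ] ℝ) (hμ : MemMalpha m α ⇑μ)
    (n : ℕ) (hn : 0 < n) (D : PartUnity m)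
    (hfin : ⊥ < tauN m α (⇑μ) n D)
    (f : ℕ → X → ℝ) (hint : ∀ k, Integrable (f k) m)
    (hnorm : ∀ k, (∫ x, |f k x| ∂m) = 1)
    (C : Fin D.k → ℝ)
    (hmax : Tendsto
      (fun k => ∑ i, entTerm (μ (D.g i)) (∫ x, (D.g i : Lp ℝ ⊤ m) x * |f k (α^[n] x)| ∂m))
      atTop (nhds (tauN m α (⇑μ) n D)))
    (hC : ∀ i, Tendsto (fun k => ∫ x, (D.g i : Lp ℝ ⊤ m) x * |f k (α^[n] x)| ∂m)
      atTop (nhds (C i))) :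
    (∀ i, 0 < μ (D.g i) → 0 < C i) ∧
    sSup {r : ℝ | ∃ h : X → ℝ, Integrable h m ∧ (∫ x, |h x| ∂m) = 1 ∧
        r = ∑ i ∈ Finset.univ.filter (fun i => 0 < μ (D.g i)),
              μ (D.g i) * ((∫ x, (D.g i : Lp ℝ ⊤ m) x * |h (α^[n] x)| ∂m) / C i)} = 1 := by
  exact maximizing_sequence_sup_eq_one_general hα hbdd μ.toLinearMap hμ.1 hμ.2.1 n D hfin f hint
    hnorm C hmax hC

end
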